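/- arXiv:2210.15730 — 2 statements merged into one kernel-verified Lean document; each statement's English description precedes it below -/
import Mathlib

section
/- For every integer r ≥ 1, every real λ > −1/2 and every v ∈ ℝ, one has e_{2r}(v,λ) = c_λ ∫_{−1}^{1} (1−t²)^{λ−1/2} (1 + sign(v) · S_{2r}(t,λ)) e^{−ivt} dt, where S_{2r}(t,λ) = Σ_{s=0}^{r} (−1)^s · binom(r,s) · ((λ+r)_s/(λ+1/2)_s) · (1−t²)^s. -/
open Real MeasureTheory Finset

/-- Normalized Bessel function j_lambda(v). -/
noncomputable def nbessel (l v : ℝ) : ℝ :=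
  Real.Gamma (l + 1) *
    ∑' k : ℕ, (-1 : ℝ) ^ k / (Nat.factorial k * Real.Gamma (k + l + 1)) * (v / 2) ^ (2 * k)

/-- Pochhammer symbol (z)_n = z(z+1)...(z+n-1), with (z)_0 = 1. -/
noncomputable def poch (z : ℝ) (n : ℕ) : ℝ := ∏ i ∈ Finset.range n, (z + i)

/-- The constant c_lambda = Gamma(lambda+1)/(sqrt(pi) Gamma(lambda+1/2)). -/
noncomputable def cgeg (l : ℝ) : ℝ :=
  Real.Gamma (l + 1) / (Real.sqrt Real.pi * Real.Gamma (l + 1 / 2))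

/-- The function e_{2r}(v, lambda). -/
noncomputable def e2r (r : ℕ) (l : ℝ) (v : ℝ) : ℝ :=
  nbessel l v + (-1 : ℝ) ^ r * (v ^ (2 * r) / (2 ^ (2 * r) * poch (l + 1) (2 * r))) *
    nbessel (l + 2 * r) v * Real.sign v

/-- The sum S_{2r}(t, lambda). -/
noncomputable def S2r (r : ℕ) (l : ℝ) (t : ℝ) : ℝ :=
  ∑ s ∈ Finset.range (r + 1), (-1 : ℝ) ^ s * (r.choose s : ℝ) *
    (poch (l + r) s / poch (l + 1 / 2) s) * (1 - t ^ 2) ^ s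

lemma integral_Ioo_rpow_mul_one_sub_rpow {a b : ℝ} (ha : 0 < a) (hb : 0 < b) :
    ∫ x in Set.Ioo (0 : ℝ) 1, x ^ (a - 1) * (1 - x) ^ (b - 1) =
      Real.Gamma a * Real.Gamma b / Real.Gamma (a + b) := by
  change _ = ProbabilityTheory.beta a b
  rw [ProbabilityTheory.beta_eq_betaIntegralReal a b ha hb, Complex.betaIntegral,
    intervalIntegral.integral_of_le zero_le_one, integral_Ioc_eq_integral_Ioo,
    ← Complex.ofReal_re (∫ x in Set.Ioo (0 : ℝ) 1, x ^ (a - 1) * (1 - x) ^ (b - 1)),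
    ← integral_complex_ofReal]
  congr 1
  refine setIntegral_congr_fun measurableSet_Ioo fun x hx => ?_
  have h1 : 0 ≤ x := hx.1.le
  have h2 : 0 ≤ 1 - x := by linarith [hx.2]
  push_cast [Complex.ofReal_cpow h1, Complex.ofReal_cpow h2]
  rfl

lemma integral_one_sub_sq_rpow_mul_pow {l : ℝ} (hl : -(1 / 2 : ℝ) < l) (k : ℕ) :
    ∫ t in (-1 : ℝ)..1, (1 - t ^ 2) ^ (l - 1 / 2) * t ^ (2 * k) =
      Real.Gamma (k + 1 / 2) * Real.Gamma (l + 1 / 2) / Real.Gamma (k + l + 1) := by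
  set G : ℝ → ℝ := (Set.Iio (1 : ℝ)).indicator
    fun x => x ^ ((k : ℝ) + 1 / 2 - 1) * (1 - x) ^ (l + 1 / 2 - 1) with hG
  set F : ℝ → ℝ := (Set.Iio (1 : ℝ)).indicator
    fun t => (1 - t ^ 2) ^ (l - 1 / 2) * t ^ (2 * k) with hF
  have hbeta : ∫ x in Set.Ioi (0 : ℝ), G x =
      Real.Gamma (k + 1 / 2) * Real.Gamma (l + 1 / 2) / Real.Gamma (k + l + 1) := by
    rw [hG, setIntegral_indicator measurableSet_Iio, Set.Ioi_inter_Iio,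
      integral_Ioo_rpow_mul_one_sub_rpow (by positivity) (by linarith)]
    ring_nf
  have hsubst : ∫ x in Set.Ioi (0 : ℝ), G x = 2 * ∫ t in Set.Ioi (0 : ℝ), F t := by
    rw [← integral_comp_rpow_Ioi_of_pos (g := G) two_pos, ← integral_const_mul]
    refine setIntegral_congr_fun measurableSet_Ioi fun t (ht : 0 < t) => ?_
    simp only [hG, hF, Set.indicator, Set.mem_Iio, smul_eq_mul, Real.rpow_two]
    have hiff : t ^ 2 < 1 ↔ t < 1 := by
      rw [sq_lt_one_iff_abs_lt_one, abs_of_pos ht]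
    by_cases h : t < 1
    · rw [if_pos (hiff.2 h), if_pos h]
      have hpow : t ^ ((2 : ℝ) - 1) * (t ^ 2) ^ ((k : ℝ) + 1 / 2 - 1) = t ^ (2 * k) := by
        rw [← Real.rpow_two, ← Real.rpow_mul ht.le, ← Real.rpow_add ht, ← Real.rpow_natCast]
        push_cast
        ring_nf
      rw [← hpow]
      ring_nf
    · rw [if_neg (hiff.not.2 h), if_neg h]
      simp
  rw [← hbeta, hsubst, ← integral_comp_abs, intervalIntegral.integral_of_le (by norm_num),
    integral_Ioc_eq_integral_Ioo, ← integral_indicator measurableSet_Ioo]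
  congr 1
  funext t
  simp only [hF, Set.indicator, Set.mem_Iio, Set.mem_Ioo, abs_lt, sq_abs]
  rw [pow_mul |t|, sq_abs, ← pow_mul]

lemma Gamma_nat_add_half_mul (k : ℕ) :
    Real.Gamma (k + 1 / 2) * (2 ^ (2 * k) * k.factorial) = (2 * k).factorial * √π := by
  induction k with
  | zero => simp [Real.Gamma_one_half_eq, -one_div]
  | succ k ih =>
    have h : ((k + 1 : ℕ) : ℝ) + 1 / 2 = (k + 1 / 2) + 1 := by push_cast; ring
    rw [h, Real.Gamma_add_one (by positivity), show 2 * (k + 1) = 2 * k + 1 + 1 by ring,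
      Nat.factorial_succ, Nat.factorial_succ, Nat.factorial_succ]
    push_cast
    linear_combination (2 * (k : ℝ) + 1) * (2 * k + 2) * ih

lemma intervalIntegrable_one_sub_sq_rpow {l : ℝ} (hl : -(1 / 2 : ℝ) < l) :
    IntervalIntegrable (fun t : ℝ => (1 - t ^ 2) ^ (l - 1 / 2)) volume (-1) 1 := by
  by_contra h
  have h0 := intervalIntegral.integral_undef h
  have h1 := integral_one_sub_sq_rpow_mul_pow hl 0
  simp only [mul_zero, pow_zero, mul_one] at h1
  rw [h0] at h1
  have := Real.Gamma_pos_of_pos (show 0 < ((0 : ℕ) : ℝ) + 1 / 2 by norm_num)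
  have := Real.Gamma_pos_of_pos (show 0 < l + 1 / 2 by linarith)
  have := Real.Gamma_pos_of_pos (show 0 < ((0 : ℕ) : ℝ) + l + 1 by norm_num; linarith)
  exact absurd h1 (by positivity)

lemma intervalIntegrable_ofReal_one_sub_sq_rpow {l : ℝ} (hl : -(1 / 2 : ℝ) < l) :
    IntervalIntegrable (fun t : ℝ => (((1 - t ^ 2) ^ (l - 1 / 2) : ℝ) : ℂ)) volume (-1) 1 :=
  let h := intervalIntegrable_one_sub_sq_rpow hl
  ⟨h.1.ofReal, h.2.ofReal⟩

/-- The general term of the power series of the normalized Bessel function. -/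
noncomputable def besselTerm (l v : ℝ) (k : ℕ) : ℝ :=
  (-1 : ℝ) ^ k / (Nat.factorial k * Real.Gamma (k + l + 1)) * (v / 2) ^ (2 * k)

lemma hasSum_integral_cos {l : ℝ} (hl : -(1 / 2 : ℝ) < l) (v : ℝ) :
    HasSum (fun k => √π * Real.Gamma (l + 1 / 2) * besselTerm l v k)
      (∫ t in (-1 : ℝ)..1, (1 - t ^ 2) ^ (l - 1 / 2) * Real.cos (v * t)) := by
  have hw := intervalIntegrable_one_sub_sq_rpow hl
  have key : HasSum (fun k => ∫ t in (-1 : ℝ)..1,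
      (1 - t ^ 2) ^ (l - 1 / 2) * ((-1) ^ k * (v * t) ^ (2 * k) / (2 * k).factorial))
      (∫ t in (-1 : ℝ)..1, (1 - t ^ 2) ^ (l - 1 / 2) * Real.cos (v * t)) := by
    refine intervalIntegral.hasSum_integral_of_dominated_convergence
      (fun k t => (1 - t ^ 2) ^ (l - 1 / 2) * (v ^ (2 * k) / (2 * k).factorial))
      (fun k => ?_) (fun k => ae_of_all _ fun t ht => ?_) (ae_of_all _ fun t ht => ?_) ?_
      (ae_of_all _ fun t ht => (Real.hasSum_cos (v * t)).mul_left _)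
    · exact Measurable.aestronglyMeasurable (by fun_prop)
    · rw [Set.uIoc_of_le (by norm_num)] at ht
      have h1 : t ^ 2 ≤ 1 := by
        rw [sq_le_one_iff_abs_le_one, abs_le]; exact ⟨ht.1.le, ht.2⟩
      have h2 : 0 ≤ (1 - t ^ 2) ^ (l - 1 / 2) := Real.rpow_nonneg (by linarith) _
      rw [norm_mul, Real.norm_of_nonneg h2]
      refine mul_le_mul_of_nonneg_left ?_ h2
      rw [norm_div, norm_mul, norm_pow, norm_neg, norm_one, one_pow, one_mul, Real.norm_natCast,
        mul_pow, pow_mul t, Real.norm_of_nonneg (mul_nonneg ((even_two_mul k).pow_nonneg v)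
          (pow_nonneg (sq_nonneg t) k))]
      gcongr
      exact mul_le_of_le_one_right ((even_two_mul k).pow_nonneg v) (pow_le_one₀ (sq_nonneg t) h1)
    · exact (Real.hasSum_cosh v).summable.mul_left _
    · simp_rw [tsum_mul_left]
      exact hw.mul_const _
  convert key using 2 with k
  have h := integral_one_sub_sq_rpow_mul_pow hl k
  have hk := Gamma_nat_add_half_mul k
  have hf : ((2 * k).factorial : ℝ) ≠ 0 := by positivity
  have hG := (Real.Gamma_pos_of_pos (show 0 < (k : ℝ) + l + 1 by
    have : (0 : ℝ) ≤ k := k.cast_nonneg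
    linarith)).ne'
  calc √π * Real.Gamma (l + 1 / 2) * besselTerm l v k
      = ((-1) ^ k * v ^ (2 * k) / (2 * k).factorial) *
          (Real.Gamma (k + 1 / 2) * Real.Gamma (l + 1 / 2) / Real.Gamma (k + l + 1)) := by
        rw [besselTerm, div_pow]
        generalize Real.Gamma (k + 1 / 2) = B at hk ⊢
        generalize Real.Gamma (l + 1 / 2) = A
        field_simp
        linear_combination -(A * v ^ (2 * k)) * hk
    _ = _ := by
        rw [← h, ← intervalIntegral.integral_const_mul]
        refine intervalIntegral.integral_congr fun t _ => ?_
        simp only [mul_pow]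
        ring

lemma nbessel_eq_cgeg_mul_integral_cos {l : ℝ} (hl : -(1 / 2 : ℝ) < l) (v : ℝ) :
    nbessel l v =
      cgeg l * ∫ t in (-1 : ℝ)..1, (1 - t ^ 2) ^ (l - 1 / 2) * Real.cos (v * t) := by
  have hG := (Real.Gamma_pos_of_pos (show 0 < l + 1 / 2 by linarith)).ne'
  rw [← (hasSum_integral_cos hl v).tsum_eq, tsum_mul_left, cgeg, nbessel]
  simp only [besselTerm]
  generalize Real.Gamma (l + 1 / 2) = A at hG ⊢
  field_simp

lemma summable_besselTerm {l : ℝ} (hl : -(1 / 2 : ℝ) < l) (v : ℝ) :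
    Summable (besselTerm l v) := by
  have hG := Real.Gamma_pos_of_pos (show 0 < l + 1 / 2 by linarith)
  exact (summable_mul_left_iff (by positivity)).1 (hasSum_integral_cos hl v).summable

lemma nbessel_eq_cgeg_mul_integral_exp {l : ℝ} (hl : -(1 / 2 : ℝ) < l) (v : ℝ) :
    (nbessel l v : ℂ) = (cgeg l : ℂ) * ∫ t in (-1 : ℝ)..1,
      (((1 - t ^ 2) ^ (l - 1 / 2) : ℝ) : ℂ) * Complex.exp (-Complex.I * (v * t : ℝ)) := by
  set f : ℝ → ℂ := fun t =>
    (((1 - t ^ 2) ^ (l - 1 / 2) : ℝ) : ℂ) * Complex.exp (-Complex.I * (v * t : ℝ)) with hf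
  have hw := intervalIntegrable_ofReal_one_sub_sq_rpow hl
  have hfi : IntervalIntegrable f volume (-1) 1 :=
    hw.mul_continuousOn (by fun_prop)
  have hfi' : IntervalIntegrable (fun t => f (-t)) volume (-1) 1 := by
    simp only [hf, neg_sq]
    exact hw.mul_continuousOn (by fun_prop)
  have hneg : ∫ t in (-1 : ℝ)..1, f (-t) = ∫ t in (-1 : ℝ)..1, f t := by
    rw [intervalIntegral.integral_comp_neg, neg_neg]
  have hcos : ((∫ t in (-1 : ℝ)..1, (1 - t ^ 2) ^ (l - 1 / 2) * Real.cos (v * t) : ℝ) : ℂ) * 2 =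
      (∫ t in (-1 : ℝ)..1, f t) + ∫ t in (-1 : ℝ)..1, f (-t) := by
    rw [← intervalIntegral.integral_add hfi hfi', ← intervalIntegral.integral_ofReal,
      ← intervalIntegral.integral_mul_const]
    refine intervalIntegral.integral_congr fun t _ => ?_
    simp only [hf, neg_sq, Complex.ofReal_mul, Complex.ofReal_cos, Complex.cos,
      Complex.ofReal_neg]
    ring_nf
  rw [hneg, ← two_mul, mul_comm] at hcos
  rw [nbessel_eq_cgeg_mul_integral_cos hl, Complex.ofReal_mul,
    mul_left_cancel₀ two_ne_zero hcos]

lemma poch_succ (z : ℝ) (n : ℕ) : poch z (n + 1) = poch z n * (z + n) :=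
  Finset.prod_range_succ _ _

lemma poch_succ' (z : ℝ) (n : ℕ) : poch z (n + 1) = z * poch (z + 1) n := by
  rw [poch, Finset.prod_range_succ', poch, mul_comm]
  congr 1
  · simp
  · refine Finset.prod_congr rfl fun i _ => ?_
    push_cast
    ring

lemma poch_pos {z : ℝ} (hz : 0 < z) (n : ℕ) : 0 < poch z n :=
  Finset.prod_pos fun i _ => by positivity

lemma poch_mul_Gamma {z : ℝ} (hz : 0 < z) (n : ℕ) :
    poch z n * Real.Gamma z = Real.Gamma (z + n) := by
  induction n with
  | zero => simp [poch]
  | succ n ih =>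
    rw [poch_succ, Nat.cast_succ, ← add_assoc, Real.Gamma_add_one (by positivity), ← ih]
    ring

/-- The Chu–Vandermonde identity. -/
lemma sum_choose_mul_poch_div_poch (r : ℕ) (b : ℝ) {c : ℝ} (hc : 0 < c) :
    ∑ s ∈ Finset.range (r + 1), (-1 : ℝ) ^ s * (r.choose s : ℝ) * (poch b s / poch c s) =
      poch (c - b) r / poch c r := by
  induction r generalizing b c with
  | zero => simp [poch]
  | succ r ih =>
    have hrec : ∑ s ∈ Finset.range (r + 1 + 1),
        (-1 : ℝ) ^ s * ((r + 1).choose s : ℝ) * (poch b s / poch c s) =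
        (∑ s ∈ Finset.range (r + 1), (-1 : ℝ) ^ s * (r.choose s : ℝ) * (poch b s / poch c s)) -
        b / c * ∑ s ∈ Finset.range (r + 1), (-1 : ℝ) ^ s * (r.choose s : ℝ) *
          (poch (b + 1) s / poch (c + 1) s) := by
      have htop : ∑ s ∈ Finset.range (r + 1),
          (-1 : ℝ) ^ s * (r.choose s : ℝ) * (poch b s / poch c s) =
          ∑ s ∈ Finset.range (r + 1 + 1),
          (-1 : ℝ) ^ s * (r.choose s : ℝ) * (poch b s / poch c s) := by
        simp [Finset.sum_range_succ _ (r + 1)]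
      rw [htop, Finset.sum_range_succ', Finset.sum_range_succ' _ (r + 1), Finset.mul_sum,
        add_sub_right_comm, ← Finset.sum_sub_distrib]
      congr 1
      refine Finset.sum_congr rfl fun s _ => ?_
      rw [Nat.choose_succ_succ, poch_succ' b, poch_succ' c, mul_div_mul_comm]
      · push_cast
        ring
      · simp
    have h1 := (poch_pos hc r).ne'
    have h2 := (poch_pos (show 0 < c + 1 by linarith) r).ne'
    have h3 : c * poch (c + 1) r = poch c r * (c + r) := by rw [← poch_succ', poch_succ]
    rw [hrec, ih b hc, ih (b + 1) (show 0 < c + 1 by linarith), add_sub_add_right_eq_sub,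
      poch_succ (c - b), poch_succ c]
    have h4 : b / c * (poch (c - b) r / poch (c + 1) r) =
        b * poch (c - b) r / (poch c r * (c + r)) := by
      rw [← h3, div_mul_div_comm]
    have h5 : c + r ≠ 0 := by positivity
    rw [h4]
    field_simp
    ring

lemma poch_eq_zero_of_lt {k r : ℕ} (h : k < r) : poch ((k : ℝ) + 1 - r) r = 0 := by
  refine Finset.prod_eq_zero (i := r - 1 - k) (Finset.mem_range.2 (by omega)) ?_
  rw [Nat.sub_sub, Nat.cast_sub (by omega)]
  push_cast
  ring

/-- The combination of shifted Bessel coefficients collapses by Chu–Vandermonde. -/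
lemma sum_mul_besselTerm (r : ℕ) {l : ℝ} (hl : -(1 / 2 : ℝ) < l) (v : ℝ) (k : ℕ) :
    ∑ s ∈ Finset.range (r + 1),
      (-1 : ℝ) ^ s * (r.choose s : ℝ) * poch (l + r) s * besselTerm (l + s) v k =
      poch ((k : ℝ) + 1 - r) r / poch (k + l + 1) r * besselTerm l v k := by
  have hc : 0 < (k : ℝ) + l + 1 := by
    have : (0 : ℝ) ≤ k := k.cast_nonneg
    linarith
  have h := sum_choose_mul_poch_div_poch r (l + r) hc
  rw [show (k : ℝ) + l + 1 - (l + r) = k + 1 - r by ring] at h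
  rw [← h, Finset.sum_mul]
  refine Finset.sum_congr rfl fun s _ => ?_
  rw [besselTerm, besselTerm, show (k : ℝ) + (l + s) + 1 = k + l + 1 + s by ring,
    ← poch_mul_Gamma hc]
  have := (poch_pos hc s).ne'
  have := (Real.Gamma_pos_of_pos hc).ne'
  field_simp

lemma besselTerm_shift (r : ℕ) {l : ℝ} (hl : -(1 / 2 : ℝ) < l) (v : ℝ) (m : ℕ) :
    poch (((m + r : ℕ) : ℝ) + 1 - r) r / poch ((m + r : ℕ) + l + 1) r * besselTerm l v (m + r) =
      (-1) ^ r * (v / 2) ^ (2 * r) * besselTerm (l + 2 * r) v m := by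
  have hc : 0 < ((m + r : ℕ) : ℝ) + l + 1 := by
    have : (0 : ℝ) ≤ (m + r : ℕ) := Nat.cast_nonneg _
    linarith
  have h1 : poch ((m : ℝ) + 1) r * m.factorial = (m + r).factorial := by
    rw [← Real.Gamma_nat_eq_factorial, ← Real.Gamma_nat_eq_factorial,
      poch_mul_Gamma (by positivity)]
    push_cast
    ring_nf
  have h2 := poch_mul_Gamma hc r
  have h3 := (poch_pos hc r).ne'
  have h4 := (Real.Gamma_pos_of_pos hc).ne'
  have h5 := (poch_pos (show 0 < (m : ℝ) + 1 by positivity) r).ne'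
  rw [show ((m + r : ℕ) : ℝ) + 1 - r = m + 1 by push_cast; ring, besselTerm, besselTerm,
    show (m : ℝ) + (l + 2 * r) + 1 = (m + r : ℕ) + l + 1 + r by push_cast; ring, ← h2, ← h1]
  field_simp
  ring

lemma sum_mul_nbessel (r : ℕ) {l : ℝ} (hl : -(1 / 2 : ℝ) < l) (v : ℝ) :
    ∑ s ∈ Finset.range (r + 1),
      (-1 : ℝ) ^ s * (r.choose s : ℝ) * (poch (l + r) s / poch (l + 1) s) * nbessel (l + s) v =
      (-1 : ℝ) ^ r * (v ^ (2 * r) / (2 ^ (2 * r) * poch (l + 1) (2 * r))) *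
        nbessel (l + 2 * r) v := by
  have hl1 : 0 < l + 1 := by linarith
  have hshift (s : ℕ) : -(1 / 2 : ℝ) < l + s := by
    have : (0 : ℝ) ≤ s := s.cast_nonneg
    linarith
  have hnb (n : ℕ) : nbessel (l + n) v =
      poch (l + 1) n * Real.Gamma (l + 1) * ∑' k, besselTerm (l + n) v k := by
    rw [poch_mul_Gamma hl1, add_right_comm]
    rfl
  have hsum : HasSum (fun k => ∑ s ∈ Finset.range (r + 1),
      (-1 : ℝ) ^ s * (r.choose s : ℝ) * poch (l + r) s * besselTerm (l + s) v k)
      (∑ s ∈ Finset.range (r + 1),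
        (-1 : ℝ) ^ s * (r.choose s : ℝ) * poch (l + r) s * ∑' k, besselTerm (l + s) v k) :=
    hasSum_sum fun s _ => (summable_besselTerm (hshift s) v).hasSum.mul_left _
  simp_rw [sum_mul_besselTerm r hl] at hsum
  rw [← hasSum_nat_add_iff' r, Finset.sum_eq_zero (s := Finset.range r) fun k hk => by
    rw [poch_eq_zero_of_lt (Finset.mem_range.1 hk), zero_div, zero_mul], sub_zero] at hsum
  simp_rw [besselTerm_shift r hl] at hsum
  have h2r := hnb (2 * r)
  push_cast at h2r
  have hp := (poch_pos hl1 (2 * r)).ne'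
  calc _ = Real.Gamma (l + 1) * ∑ s ∈ Finset.range (r + 1),
        (-1 : ℝ) ^ s * (r.choose s : ℝ) * poch (l + r) s * ∑' k, besselTerm (l + s) v k := by
        rw [Finset.mul_sum]
        refine Finset.sum_congr rfl fun s _ => ?_
        have := (poch_pos hl1 s).ne'
        rw [hnb]
        field_simp
    _ = _ := by
        rw [← hsum.tsum_eq, tsum_mul_left, h2r, div_pow]
        field_simp

lemma cgeg_div_poch {l : ℝ} (hl : -(1 / 2 : ℝ) < l) (s : ℕ) :
    cgeg l / poch (l + 1 / 2) s = cgeg (l + s) / poch (l + 1) s := by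
  have h1 : 0 < l + 1 := by linarith
  have h2 : 0 < l + 1 / 2 := by linarith
  have := (poch_pos h1 s).ne'
  have := (poch_pos h2 s).ne'
  have := (Real.Gamma_pos_of_pos h2).ne'
  rw [cgeg, cgeg, add_right_comm l _ 1, add_right_comm l _ (1 / 2), ← poch_mul_Gamma h1,
    ← poch_mul_Gamma h2]
  generalize Real.Gamma (l + 1 / 2) = A at *
  generalize poch (l + 1 / 2) s = B at *
  field_simp

lemma one_sub_sq_rpow_mul_S2r (r : ℕ) (l : ℝ) {t : ℝ} (ht : t ∈ Set.Ioo (-1 : ℝ) 1) :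
    (1 - t ^ 2) ^ (l - 1 / 2) * S2r r l t = ∑ s ∈ Finset.range (r + 1),
      (-1 : ℝ) ^ s * (r.choose s : ℝ) * (poch (l + r) s / poch (l + 1 / 2) s) *
        (1 - t ^ 2) ^ (l + s - 1 / 2) := by
  have hpos : 0 < 1 - t ^ 2 := by nlinarith [ht.1, ht.2]
  rw [S2r, Finset.mul_sum]
  refine Finset.sum_congr rfl fun s _ => ?_
  rw [add_sub_right_comm, Real.rpow_add hpos, Real.rpow_natCast]
  ring

/-- integral representation of e_{2r}(v, lambda). -/
theorem stmt7 (r : ℕ) (hr : 1 ≤ r) (l : ℝ) (hl : -(1 / 2 : ℝ) < l) (v : ℝ) :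
    (e2r r l v : ℂ) =
      (cgeg l : ℂ) * ∫ t in (-1 : ℝ)..1,
        (((1 - t ^ 2) ^ (l - 1 / 2) * (1 + Real.sign v * S2r r l t) : ℝ) : ℂ) *
          Complex.exp (-Complex.I * (v * t : ℝ)) := by
  set E : ℝ → ℝ → ℂ := fun a t =>
    (((1 - t ^ 2) ^ (a - 1 / 2) : ℝ) : ℂ) * Complex.exp (-Complex.I * (v * t : ℝ)) with hE
  set q : ℕ → ℝ := fun s =>
    (-1 : ℝ) ^ s * (r.choose s : ℝ) * (poch (l + r) s / poch (l + 1 / 2) s) with hq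
  have hshift (s : ℕ) : -(1 / 2 : ℝ) < l + s := by
    have : (0 : ℝ) ≤ s := s.cast_nonneg
    linarith
  have hEi {a : ℝ} (ha : -(1 / 2 : ℝ) < a) : IntervalIntegrable (E a) volume (-1) 1 :=
    (intervalIntegrable_ofReal_one_sub_sq_rpow ha).mul_continuousOn (by fun_prop)
  have hqi : ∀ s ∈ Finset.range (r + 1),
      IntervalIntegrable (fun t => (q s : ℂ) * E (l + s) t) volume (-1) 1 :=
    fun s _ => (hEi (hshift s)).const_mul _
  have hsumi : IntervalIntegrable (fun t => ∑ s ∈ Finset.range (r + 1), (q s : ℂ) * E (l + s) t)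
      volume (-1) 1 := by
    simpa only [Finset.sum_fn] using IntervalIntegrable.sum _ hqi
  have hsplit : ∫ t in (-1 : ℝ)..1,
      (((1 - t ^ 2) ^ (l - 1 / 2) * (1 + Real.sign v * S2r r l t) : ℝ) : ℂ) *
        Complex.exp (-Complex.I * (v * t : ℝ)) =
      ∫ t in (-1 : ℝ)..1, (E l t + (Real.sign v : ℂ) *
        ∑ s ∈ Finset.range (r + 1), (q s : ℂ) * E (l + s) t) := by
    simp only [intervalIntegral.integral_of_le (show (-1 : ℝ) ≤ 1 by norm_num),
      integral_Ioc_eq_integral_Ioo]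
    refine setIntegral_congr_fun measurableSet_Ioo fun t ht => ?_
    simp only [hE, ← mul_assoc, ← Finset.sum_mul]
    rw [mul_add, mul_one, mul_left_comm, one_sub_sq_rpow_mul_S2r r l ht]
    push_cast [hq]
    ring
  have hcoef (s : ℕ) : (cgeg l : ℂ) * ((q s : ℂ) * ∫ t in (-1 : ℝ)..1, E (l + s) t) =
      (((-1 : ℝ) ^ s * (r.choose s : ℝ) * (poch (l + r) s / poch (l + 1) s) *
        nbessel (l + s) v : ℝ) : ℂ) := by
    have h : cgeg l * q s = (-1 : ℝ) ^ s * (r.choose s : ℝ) *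
        (poch (l + r) s / poch (l + 1) s) * cgeg (l + s) := by
      linear_combination
        (-1 : ℝ) ^ s * (r.choose s : ℝ) * poch (l + r) s * cgeg_div_poch hl s
    rw [← mul_assoc, ← Complex.ofReal_mul, h, Complex.ofReal_mul,
      Complex.ofReal_mul _ (nbessel _ _), nbessel_eq_cgeg_mul_integral_exp (hshift s), mul_assoc]
  rw [hsplit, intervalIntegral.integral_add (hEi hl)
    (hsumi.const_mul _), intervalIntegral.integral_const_mul,
    intervalIntegral.integral_finsetSum hqi, mul_add, ← nbessel_eq_cgeg_mul_integral_exp hl,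
    mul_left_comm, Finset.mul_sum]
  simp_rw [intervalIntegral.integral_const_mul, hcoef]
  rw [← Complex.ofReal_sum, sum_mul_nbessel r hl, e2r]
  push_cast
  ring
end

section
/- Let a > 0 with 2/a ∈ ℕ, κ ≥ 0 with λ = (2κ−1)/a ≥ −1/2, and let f be a Schwartz function on ℝ. Define the one-dimensional (κ,a)-generalized Fourier transform F_{κ,a}(f)(y) = (1/(2 a^{λ} Γ(λ+1))) ∫_ℝ b_{κ,a}(xy) f(x) |x|^{2κ+a−2} dx. Then there exist even Schwartz functions F₁, F₂ on ℝ such that F_{κ,a}(f)(y) = F₁(|y|^{a/2}) + y · F₂(|y|^{a/2}) for all y ∈ ℝ. -/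
open Real MeasureTheory Finset SchwartzMap

/-- Kernel of the one-dimensional (kappa,a)-generalized Fourier transform. -/
noncomputable def bker (κ a : ℝ) (x : ℝ) : ℂ :=
  (nbessel ((2 * κ - 1) / a) ((2 / a) * |x| ^ (a / 2)) : ℂ)
    + Complex.exp (-(Real.pi / a) * Complex.I) * ((a ^ (-(2 / a)) : ℝ) : ℂ)
      * ((Real.Gamma ((2 * κ - 1) / a + 1) / Real.Gamma ((2 * κ - 1) / a + 1 + 2 / a) : ℝ) : ℂ)
      * (x : ℂ) * (nbessel ((2 * κ - 1) / a + 2 / a) ((2 / a) * |x| ^ (a / 2)) : ℂ)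

/-- The one-dimensional (kappa,a)-generalized Fourier transform of a Schwartz function. -/
noncomputable def genFourier (κ a : ℝ) (f : SchwartzMap ℝ ℂ) (y : ℝ) : ℂ :=
  ((1 / (2 * a ^ ((2 * κ - 1) / a) * Real.Gamma ((2 * κ - 1) / a + 1)) : ℝ) : ℂ) *
    ∫ x : ℝ, bker κ a (x * y) * f x * ((|x| ^ (2 * κ + a - 2) : ℝ) : ℂ)

theorem contDiff_of_deriv_closed {S : Set (ℝ → ℂ)}
    (hS : ∀ F ∈ S, ∃ F' ∈ S, ∀ x, HasDerivAt F (F' x) x) {F : ℝ → ℂ} (hF : F ∈ S) (n : ℕ) :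
    ContDiff ℝ n F := by
  induction n generalizing F with
  | zero =>
    obtain ⟨F', -, h⟩ := hS F hF
    exact contDiff_zero.2 (continuous_iff_continuousAt.2 fun x => (h x).continuousAt)
  | succ n ih =>
    obtain ⟨F', hF', h⟩ := hS F hF
    rw [Nat.cast_succ, contDiff_succ_iff_deriv]
    refine ⟨fun x => (h x).differentiableAt, by simp, ?_⟩
    rw [show deriv F = F' from funext fun x => (h x).deriv]
    exact ih hF'

/-- A class of rapidly decaying functions closed under differentiation consists of Schwartz
functions. -/
theorem exists_schwartzMap_of_deriv_closed {S : Set (ℝ → ℂ)}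
    (hS : ∀ F ∈ S, ∃ F' ∈ S, ∀ x, HasDerivAt F (F' x) x)
    (hdec : ∀ F ∈ S, ∀ k : ℕ, ∃ C : ℝ, ∀ x, |x| ^ k * ‖F x‖ ≤ C) {F : ℝ → ℂ} (hF : F ∈ S) :
    ∃ f : 𝓢(ℝ, ℂ), ∀ x, f x = F x := by
  have hit : ∀ n : ℕ, ∀ G ∈ S, iteratedDeriv n G ∈ S := by
    intro n
    induction n with
    | zero => intro G hG; simpa using hG
    | succ n ih =>
      intro G hG
      obtain ⟨G', hG', h⟩ := hS G hG
      rw [iteratedDeriv_succ', show deriv G = G' from funext fun x => (h x).deriv]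
      exact ih G' hG'
  refine ⟨⟨F, ?_, fun k n => ?_⟩, fun x => rfl⟩
  · exact contDiff_infty.2 fun n => contDiff_of_deriv_closed hS hF n
  · obtain ⟨C, hC⟩ := hdec _ (hit n F hF) k
    refine ⟨C, fun x => ?_⟩
    rw [norm_iteratedFDeriv_eq_norm_iteratedDeriv]
    exact hC x

/-- The moments `∫₀¹ sᵐ h(s t) ds` of the dilates of a Schwartz function. -/
noncomputable def dilateMoment (m : ℕ) (h : 𝓢(ℝ, ℂ)) (t : ℝ) : ℂ :=
  ∫ s in (0 : ℝ)..1, (s : ℂ) ^ m * h (s * t)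

theorem hasDerivAt_dilateMoment (m : ℕ) (h : 𝓢(ℝ, ℂ)) (t : ℝ) :
    HasDerivAt (dilateMoment m h) (dilateMoment (m + 1) (derivCLM ℂ ℂ h) t) t := by
  have hc : ∀ (m : ℕ) (h : 𝓢(ℝ, ℂ)) (t : ℝ),
      Continuous fun s : ℝ => (s : ℂ) ^ m * h (s * t) := fun m h t =>
    (Complex.continuous_ofReal.pow m).mul (h.continuous.comp (by fun_prop))
  refine (intervalIntegral.hasDerivAt_integral_of_dominated_loc_of_deriv_le
    (F := fun t s => (s : ℂ) ^ m * h (s * t))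
    (F' := fun t s => (s : ℂ) ^ (m + 1) * derivCLM ℂ ℂ h (s * t))
    (bound := fun _ => SchwartzMap.seminorm ℂ 0 0 (derivCLM ℂ ℂ h))
    Filter.univ_mem ?_ ?_ ?_ ?_ ?_ ?_).2
  · exact Filter.Eventually.of_forall fun t => (hc m h t).aestronglyMeasurable
  · exact (hc m h t).intervalIntegrable _ _
  · exact (hc (m + 1) _ t).aestronglyMeasurable
  · refine Filter.Eventually.of_forall fun s hs t _ => ?_
    rw [Set.uIoc_of_le zero_le_one] at hs
    rw [norm_mul, norm_pow, Complex.norm_real, Real.norm_eq_abs, abs_of_pos hs.1]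
    calc s ^ (m + 1) * ‖derivCLM ℂ ℂ h (s * t)‖ ≤ 1 * ‖derivCLM ℂ ℂ h (s * t)‖ := by
          gcongr; exact pow_le_one₀ hs.1.le hs.2
      _ ≤ _ := by rw [one_mul]; exact SchwartzMap.norm_le_seminorm ℂ _ _
  · exact intervalIntegrable_const
  · refine Filter.Eventually.of_forall fun s _ t _ => ?_
    have h1 : HasDerivAt (fun t : ℝ => s * t) s t := by
      simpa using (hasDerivAt_id t).const_mul s
    have h2 := ((h.differentiableAt (x := s * t)).hasDerivAt.scomp t h1).const_mul ((s : ℂ) ^ m)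
    refine h2.congr_deriv ?_
    simp only [derivCLM_apply, Complex.real_smul]
    ring

theorem dilateMoment_zero_deriv (h : 𝓢(ℝ, ℂ)) (t : ℝ) :
    (t : ℂ) * dilateMoment 0 (derivCLM ℂ ℂ h) t = h t - h 0 := by
  have h2 : ∀ s ∈ Set.uIcc (0 : ℝ) 1,
      HasDerivAt (fun s => h (s * t)) ((t : ℂ) * derivCLM ℂ ℂ h (s * t)) s := by
    intro s _
    have h1 : HasDerivAt (fun s : ℝ => s * t) t s := by
      simpa using (hasDerivAt_id s).mul_const t
    exact (h.differentiableAt (x := s * t)).hasDerivAt.scomp s h1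
  have h3 := intervalIntegral.integral_eq_sub_of_hasDerivAt h2
    (Continuous.intervalIntegrable
      (continuous_const.mul ((derivCLM ℂ ℂ h).continuous.comp (by fun_prop))) _ _)
  simp only [one_mul, zero_mul] at h3
  rw [← h3, dilateMoment, ← intervalIntegral.integral_const_mul]
  simp

/-- A Schwartz function vanishing at the origin is `t` times a Schwartz function. -/
theorem exists_schwartzMap_mul_eq (h : 𝓢(ℝ, ℂ)) (h0 : h 0 = 0) :
    ∃ g : 𝓢(ℝ, ℂ), ∀ t : ℝ, (t : ℂ) * g t = h t := by
  set G := dilateMoment 0 (derivCLM ℂ ℂ h) with hG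
  have hGs : ∀ n : ℕ, ContDiff ℝ n G := fun n => contDiff_of_deriv_closed
    (S := {F | ∃ m h, F = dilateMoment m h})
    (by rintro _ ⟨m, h, rfl⟩; exact ⟨_, ⟨_, _, rfl⟩, hasDerivAt_dilateMoment m h⟩) ⟨_, _, rfl⟩ n
  have hmul : ∀ t : ℝ, (t : ℂ) * G t = h t := fun t => by
    rw [hG, dilateMoment_zero_deriv, h0, sub_zero]
  obtain ⟨g, hg⟩ := exists_schwartzMap_of_deriv_closed
    (S := {F | (∀ n : ℕ, ContDiff ℝ n F) ∧ ∃ (m : ℕ) (H : 𝓢(ℝ, ℂ)),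
      ∀ t : ℝ, (t : ℂ) ^ m * F t = H t})
    (by
      rintro F ⟨hF, m, H, hH⟩
      have hd : ∀ x, HasDerivAt F (deriv F x) x := fun x =>
        ((hF 1).differentiable (by simp) x).hasDerivAt
      refine ⟨deriv F, ⟨fun n => ?_, m + 1,
        smulLeftCLM ℂ (fun t : ℝ => t) (derivCLM ℂ ℂ H) - (m : ℂ) • H, fun t => ?_⟩, hd⟩
      · have := hF (n + 1)
        rw [Nat.cast_succ, contDiff_succ_iff_deriv] at this
        exact this.2.2
      · have h1 : HasDerivAt H ((m : ℂ) * (t : ℂ) ^ (m - 1) * F t + (t : ℂ) ^ m * deriv F t) t := by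
          have h2 := ((hasDerivAt_pow m (t : ℂ)).comp_ofReal).mul (hd t)
          refine h2.congr_of_eventuallyEq (Filter.Eventually.of_forall fun x => ?_)
          simp [hH]
        have h3 : smulLeftCLM ℂ (fun t : ℝ => t) (derivCLM ℂ ℂ H) t = t * deriv H t := by
          rw [smulLeftCLM_apply_apply (by fun_prop)]; simp
        simp only [sub_apply, smul_apply, h3, h1.deriv, smul_eq_mul, ← hH]
        cases m with
        | zero => simp
        | succ m => simp only [Nat.add_sub_cancel]; ring)
    (by
      rintro F ⟨hF, m, H, hH⟩ k
      obtain ⟨C, hC⟩ := (isCompact_Icc (a := (-1 : ℝ)) (b := 1)).exists_bound_of_continuousOn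
        (f := F) (hF 0).continuous.continuousOn
      refine ⟨max C (SchwartzMap.seminorm ℂ k 0 H), fun x => ?_⟩
      by_cases hx : |x| ≤ 1
      · refine le_max_of_le_left (le_trans ?_ (hC x (abs_le.1 hx)))
        exact mul_le_of_le_one_left (norm_nonneg _) (pow_le_one₀ (abs_nonneg _) hx)
      · refine le_max_of_le_right (le_trans ?_ (SchwartzMap.norm_pow_mul_le_seminorm ℂ H k x))
        rw [← hH, norm_mul, norm_pow, Complex.norm_real, Real.norm_eq_abs]
        gcongr
        exact le_mul_of_one_le_left (norm_nonneg _) (one_le_pow₀ (not_le.1 hx).le))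
    (F := G) ⟨hGs, 1, h, fun t => by simpa using hmul t⟩
  exact ⟨g, fun t => by rw [hg, hmul]⟩

/-- Coefficients of the normalized Bessel function as a power series in `(v / 2) ^ 2`. -/
noncomputable def besselCoeff (l : ℝ) (k : ℕ) : ℝ :=
  Real.Gamma (l + 1) * ((-1) ^ k / (Nat.factorial k * Real.Gamma (k + l + 1)))

theorem nbessel_eq_tsum (l v : ℝ) :
    nbessel l v = ∑' k, besselCoeff l k * ((v / 2) ^ 2) ^ k := by
  rw [nbessel, ← tsum_mul_left]
  simp only [besselCoeff, pow_mul, mul_assoc]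

theorem besselCoeff_zero {l : ℝ} (hl : -1 < l) : besselCoeff l 0 = 1 := by
  have := (Real.Gamma_pos_of_pos (show 0 < l + 1 by linarith)).ne'
  simp [besselCoeff, this]

theorem succ_mul_besselCoeff_succ {l : ℝ} (hl : -1 < l) (k : ℕ) :
    (k + 1) * besselCoeff l (k + 1) = -(besselCoeff (l + 1) k / (l + 1)) := by
  have h1 : l + 1 ≠ 0 := by linarith
  have h2 : (0 : ℝ) < k + (l + 1) + 1 := by have := k.cast_nonneg (α := ℝ); linarith
  have h3 := (Real.Gamma_pos_of_pos h2).ne'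
  have h4 : ((k + 1 : ℕ) : ℝ) + l + 1 = k + (l + 1) + 1 := by push_cast; ring
  have h5 : (k.factorial : ℝ) ≠ 0 := by positivity
  rw [besselCoeff, besselCoeff, h4, Real.Gamma_add_one h1, Nat.factorial_succ]
  push_cast
  have h6 : (k : ℝ) + 1 ≠ 0 := by positivity
  field_simp
  ring

theorem add_mul_besselCoeff {l : ℝ} (hl : -1 < l) (k : ℕ) :
    (l + 1 + k) * besselCoeff (l + 1) k = (l + 1) * besselCoeff l k := by
  have h1 : l + 1 ≠ 0 := by linarith
  have h2 : (0 : ℝ) < k + l + 1 := by have := k.cast_nonneg (α := ℝ); linarith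
  have h3 := (Real.Gamma_pos_of_pos h2).ne'
  have h4 : (k : ℝ) + (l + 1) + 1 = (k + l + 1) + 1 := by ring
  have h5 : (k.factorial : ℝ) ≠ 0 := by positivity
  rw [besselCoeff, besselCoeff, h4, Real.Gamma_add_one h1, Real.Gamma_add_one h2.ne']
  field_simp
  ring

theorem abs_besselCoeff_le {l : ℝ} (hl : -(1 / 2) ≤ l) (k : ℕ) :
    |besselCoeff l k| ≤ 2 ^ k / k.factorial := by
  induction k with
  | zero => simp [besselCoeff_zero (show -1 < l by linarith)]
  | succ k ih =>
    have h1 := succ_mul_besselCoeff_succ (show -1 < l by linarith) k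
    have h2 := add_mul_besselCoeff (show -1 < l by linarith) k
    have h3 : (1 / 2 : ℝ) ≤ l + 1 + k := by have := k.cast_nonneg (α := ℝ); linarith
    have h4 : besselCoeff l (k + 1) = -(besselCoeff l k / ((k + 1) * (l + 1 + k))) := by
      have h5 : l + 1 ≠ 0 := by linarith
      have h6 : l + 1 + k ≠ 0 := by linarith
      have h7 : (k : ℝ) + 1 ≠ 0 := by positivity
      field_simp at h1 ⊢
      apply mul_left_cancel₀ h5
      linear_combination (l + 1 + k) * h1 - h2
    rw [h4, abs_neg, abs_div, abs_of_pos (show 0 < ((k : ℝ) + 1) * (l + 1 + k) by positivity),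
      div_le_iff₀ (by positivity), Nat.factorial_succ]
    refine ih.trans ?_
    push_cast
    rw [div_mul_eq_mul_div, div_le_div_iff₀ (by positivity) (by positivity)]
    have : (0 : ℝ) < (k.factorial : ℝ) * (k + 1) * 2 ^ k := by positivity
    rw [pow_succ]
    nlinarith

theorem summable_besselCoeff_mul_pow {l : ℝ} (hl : -(1 / 2) ≤ l) (u : ℝ) :
    Summable fun k => besselCoeff l k * u ^ k := by
  refine Summable.of_norm_bounded (Real.summable_pow_div_factorial (2 * |u|)) fun k => ?_
  rw [norm_mul, norm_pow, Real.norm_eq_abs, Real.norm_eq_abs, mul_pow, mul_div_right_comm]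
  gcongr
  exact abs_besselCoeff_le hl k

theorem hasDerivAt_tsum_besselCoeff {l : ℝ} (hl : -(1 / 2) ≤ l) (u : ℝ) :
    HasDerivAt (fun u => ∑' k, besselCoeff l k * u ^ k)
      (-((∑' k, besselCoeff (l + 1) k * u ^ k) / (l + 1))) u := by
  set r := |u| + 1
  have hr : 0 < r := by positivity
  have hd := hasDerivAt_tsum_of_isPreconnected (𝕜 := ℝ)
    (u := fun k : ℕ => 2 ^ k / (k.factorial : ℝ) * (k * r ^ (k - 1)))
    (g := fun k u => besselCoeff l k * u ^ k)
    (g' := fun k u => besselCoeff l k * (k * u ^ (k - 1)))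
    (t := Metric.ball 0 r) (y₀ := 0) (y := u) ?_ Metric.isOpen_ball
    (convex_ball _ _).isPreconnected
    (fun k y _ => (hasDerivAt_pow k y).const_mul _) ?_ (by simpa using hr)
    (summable_besselCoeff_mul_pow hl 0) (by simp [r])
  · refine hd.congr_deriv ?_
    have hsum : Summable fun k : ℕ => besselCoeff l k * (k * u ^ (k - 1)) := by
      rw [← summable_nat_add_iff 1]
      refine (((summable_besselCoeff_mul_pow (show -(1 / 2) ≤ l + 1 by linarith) u).div_const
        (l + 1)).neg).congr fun k => ?_
      push_cast
      linear_combination -(u ^ k) * succ_mul_besselCoeff_succ (show -1 < l by linarith) k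
    rw [hsum.tsum_eq_zero_add, ← tsum_div_const, ← tsum_neg]
    simp only [Nat.cast_zero, zero_mul, mul_zero, zero_add]
    refine tsum_congr fun k => ?_
    push_cast
    linear_combination u ^ k * succ_mul_besselCoeff_succ (show -1 < l by linarith) k
  · rw [← summable_nat_add_iff 1]
    refine ((Real.summable_pow_div_factorial (2 * r)).mul_left 2).congr fun k => ?_
    have h6 : (k : ℝ) + 1 ≠ 0 := by positivity
    have h5 : (k.factorial : ℝ) ≠ 0 := by positivity
    rw [Nat.factorial_succ, mul_pow, pow_succ]
    push_cast
    field_simp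
  · intro k y hy
    have hy' : |y| ≤ r := by simpa using (Metric.mem_ball.1 hy).le
    rw [norm_mul, norm_mul, norm_pow, Real.norm_eq_abs, Real.norm_eq_abs, Real.norm_eq_abs,
      Nat.abs_cast]
    gcongr
    exact abs_besselCoeff_le hl k

theorem hasDerivAt_nbessel {l : ℝ} (hl : -(1 / 2) ≤ l) (v : ℝ) :
    HasDerivAt (nbessel l) (-(v / (2 * l + 2) * nbessel (l + 1) v)) v := by
  have h1 : HasDerivAt (fun v : ℝ => (v / 2) ^ 2) (v / 2) v := by
    refine (((hasDerivAt_id v).div_const 2).pow 2).congr_deriv ?_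
    simp
    ring
  have h2 := (hasDerivAt_tsum_besselCoeff hl ((v / 2) ^ 2)).comp v h1
  rw [← nbessel_eq_tsum] at h2
  have h3 : l + 1 ≠ 0 := by linarith
  have h4 : 2 * l + 2 ≠ 0 := by linarith
  refine (h2.congr_deriv ?_).congr_of_eventuallyEq
    (Filter.Eventually.of_forall fun v => nbessel_eq_tsum l v)
  field_simp

theorem continuous_nbessel {l : ℝ} (hl : -(1 / 2) ≤ l) : Continuous (nbessel l) :=
  continuous_iff_continuousAt.2 fun v => (hasDerivAt_nbessel hl v).continuousAt

theorem nbessel_neg (l v : ℝ) : nbessel l (-v) = nbessel l v := by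
  simp only [nbessel_eq_tsum, neg_div, neg_sq]

theorem nbessel_zero {l : ℝ} (hl : -1 < l) : nbessel l 0 = 1 := by
  rw [nbessel_eq_tsum, tsum_eq_single 0 (by intro k hk; simp [hk])]
  simp [besselCoeff_zero hl]

theorem nbessel_recurrence {l : ℝ} (hl : -(1 / 2) ≤ l) (v : ℝ) :
    (2 * l + 2) * nbessel (l + 1) v - v ^ 2 / (2 * l + 4) * nbessel (l + 2) v
      = (2 * l + 2) * nbessel l v := by
  have hd := hasDerivAt_tsum_besselCoeff (show -(1 / 2) ≤ l + 1 by linarith) ((v / 2) ^ 2)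
  have hl1 : -1 < l := by linarith
  set u := (v / 2) ^ 2 with hu
  have hs0 := summable_besselCoeff_mul_pow hl u
  have hs1 := summable_besselCoeff_mul_pow (show -(1 / 2) ≤ l + 1 by linarith) u
  have hs2 := summable_besselCoeff_mul_pow (show -(1 / 2) ≤ l + 2 by linarith) u
  have key : ∀ k : ℕ, (l + 1) * (besselCoeff l (k + 1) * u ^ (k + 1))
      = (l + 1) * (besselCoeff (l + 1) (k + 1) * u ^ (k + 1))
        - u / (l + 2) * (besselCoeff (l + 2) k * u ^ k) := by
    intro k
    have h1 := add_mul_besselCoeff hl1 (k + 1)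
    have h2 := succ_mul_besselCoeff_succ (show -1 < l + 1 by linarith) k
    rw [show l + 1 + 1 = l + 2 by ring] at h2
    push_cast at h1
    linear_combination -u ^ (k + 1) * h1 + u ^ (k + 1) * h2
  have h0 : (l + 1) * ∑' k, besselCoeff l k * u ^ k
      = (l + 1) * (∑' k, besselCoeff (l + 1) k * u ^ k)
        - u / (l + 2) * ∑' k, besselCoeff (l + 2) k * u ^ k := by
    rw [hs0.tsum_eq_zero_add, hs1.tsum_eq_zero_add, mul_add, mul_add, ← tsum_mul_left,
      ← tsum_mul_left, ← tsum_mul_left, add_sub_assoc, ← Summable.tsum_sub]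
    · rw [besselCoeff_zero hl1, besselCoeff_zero (show -1 < l + 1 by linarith)]
      congr 1
      exact tsum_congr key
    · exact ((summable_nat_add_iff 1).2 hs1).mul_left _
    · exact hs2.mul_left _
  rw [nbessel_eq_tsum, nbessel_eq_tsum, nbessel_eq_tsum, ← hu]
  have h4 : 2 * l + 4 ≠ 0 := by linarith
  have h5 : l + 2 ≠ 0 := by linarith
  have h6 : v ^ 2 / (2 * l + 4) = 2 * (u / (l + 2)) := by
    rw [hu]; field_simp; ring
  rw [h6]
  linear_combination -2 * h0

theorem abs_nbessel_le_one {l : ℝ} (hl : -(1 / 2) ≤ l) (v : ℝ) : |nbessel l v| ≤ 1 := by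
  wlog hv : 0 ≤ v generalizing v
  · simpa [nbessel_neg] using this (-v) (by linarith)
  have hc : 1 ≤ 2 * l + 2 := by linarith
  have hl1 : -(1 / 2) ≤ l + 1 := by linarith
  have h4 : 2 * l + 4 ≠ 0 := by linarith
  have hE : ∀ x : ℝ, HasDerivAt
      (fun x => nbessel l x ^ 2 + (x / (2 * l + 2) * nbessel (l + 1) x) ^ 2)
      (-(2 * (1 - 1 / (2 * l + 2)) * (x * nbessel (l + 1) x ^ 2 / (2 * l + 2)))) x := by
    intro x
    have h1 := (hasDerivAt_nbessel hl x).pow 2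
    have h2 := ((((hasDerivAt_id x).div_const (2 * l + 2)).mul
      (hasDerivAt_nbessel hl1 x)).pow 2)
    refine (h1.add h2).congr_deriv ?_
    have h3 := nbessel_recurrence hl x
    have h5 : nbessel l x = nbessel (l + 1) x
        - x ^ 2 / (2 * l + 4) * nbessel (l + 2) x / (2 * l + 2) := by
      have h6 : 2 * l + 2 ≠ 0 := by linarith
      have h7 : l + 1 ≠ 0 := by linarith
      apply mul_left_cancel₀ h6
      rw [← h3]
      field_simp
    rw [show l + 1 + 1 = l + 2 by ring, show 2 * (l + 1) + 2 = 2 * l + 4 by ring]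
    have h7 : l + 1 ≠ 0 := by linarith
    simp [h5]
    field_simp
    ring
  have hanti : AntitoneOn
      (fun x => nbessel l x ^ 2 + (x / (2 * l + 2) * nbessel (l + 1) x) ^ 2) (Set.Ici 0) := by
    refine antitoneOn_of_deriv_nonpos (convex_Ici 0)
      (fun x _ => (hE x).continuousAt.continuousWithinAt)
      (fun x _ => (hE x).differentiableAt.differentiableWithinAt) fun x hx => ?_
    rw [interior_Ici] at hx
    rw [(hE x).deriv, neg_nonpos]
    have : 1 / (2 * l + 2) ≤ 1 := by rw [div_le_one (by linarith)]; exact hc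
    have hx0 : 0 < x := hx
    have h6 : 0 ≤ 1 - 1 / (2 * l + 2) := by linarith
    positivity
  have h := hanti (Set.mem_Ici.2 le_rfl) hv hv
  simp only [nbessel_zero (show -1 < l by linarith), zero_div, zero_mul] at h
  rw [← sq_le_one_iff_abs_le_one]
  nlinarith [sq_nonneg (v / (2 * l + 2) * nbessel (l + 1) v)]

/-- The Hankel transform of order `l`, with the normalized Bessel kernel. -/
noncomputable def hankel (l : ℝ) (h : 𝓢(ℝ, ℂ)) (v : ℝ) : ℂ :=
  ∫ t in Set.Ioi (0 : ℝ), (nbessel l (t * v) : ℂ) * h t * ((t ^ (2 * l + 1) : ℝ) : ℂ)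

theorem exists_nat_rpow_le {s : ℝ} (hs : 0 ≤ s) : ∃ n : ℕ, ∀ t : ℝ, 0 < t → t ^ s ≤ 1 + t ^ n := by
  obtain ⟨n, hn⟩ := exists_nat_ge s
  refine ⟨n, fun t ht => ?_⟩
  have h0 : 0 < t ^ n := by positivity
  rcases le_total t 1 with h | h
  · linarith [Real.rpow_le_one ht.le h hs]
  · have := Real.rpow_le_rpow_of_exponent_le h hn
    rw [Real.rpow_natCast] at this
    linarith

theorem integrableOn_norm_mul_rpow (h : 𝓢(ℝ, ℂ)) {s : ℝ} (hs : 0 ≤ s) :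
    IntegrableOn (fun t : ℝ => ‖h t‖ * t ^ s) (Set.Ioi 0) := by
  obtain ⟨n, hn⟩ := exists_nat_rpow_le hs
  refine Integrable.mono' (h.integrable.norm.add (h.integrable_pow_mul volume n)).integrableOn
    ?_ ?_
  · exact (h.continuous.norm.mul
      (Real.continuous_rpow_const hs)).aestronglyMeasurable
  · refine (ae_restrict_iff' measurableSet_Ioi).2 (Filter.Eventually.of_forall fun t ht => ?_)
    have ht0 : 0 < t := ht
    have := mul_le_mul_of_nonneg_left (hn t ht0) (norm_nonneg (h t))
    rw [Real.norm_of_nonneg (by positivity)]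
    simp only [Pi.add_apply, Real.norm_of_nonneg ht0.le]
    linarith

theorem norm_ofReal_mul_mul_rpow_le {x : ℝ} (hx : |x| ≤ 1) (z : ℂ) {t : ℝ} (ht : 0 < t) (s : ℝ) :
    ‖(x : ℂ) * z * ((t ^ s : ℝ) : ℂ)‖ ≤ ‖z‖ * t ^ s := by
  rw [norm_mul, norm_mul, Complex.norm_real, Complex.norm_real, Real.norm_eq_abs,
    Real.norm_of_nonneg (show 0 ≤ t ^ s by positivity)]
  gcongr
  exact mul_le_of_le_one_left (norm_nonneg _) hx

theorem continuous_hankel_integrand {l s : ℝ} (hl : -(1 / 2) ≤ l) (hs : 0 ≤ s)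
    (h : 𝓢(ℝ, ℂ)) (v : ℝ) :
    Continuous fun t : ℝ => (nbessel l (t * v) : ℂ) * h t * ((t ^ s : ℝ) : ℂ) :=
  ((Complex.continuous_ofReal.comp ((continuous_nbessel hl).comp (by fun_prop))).mul
    h.continuous).mul (Complex.continuous_ofReal.comp (Real.continuous_rpow_const hs))

theorem integrableOn_hankel_integrand {l s : ℝ} (hl : -(1 / 2) ≤ l) (hs : 0 ≤ s)
    (h : 𝓢(ℝ, ℂ)) (v : ℝ) :
    IntegrableOn (fun t : ℝ => (nbessel l (t * v) : ℂ) * h t * ((t ^ s : ℝ) : ℂ)) (Set.Ioi 0) :=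
  Integrable.mono' (integrableOn_norm_mul_rpow h hs)
    (continuous_hankel_integrand hl hs h v).aestronglyMeasurable
    ((ae_restrict_iff' measurableSet_Ioi).2 (Filter.Eventually.of_forall fun _ ht =>
      norm_ofReal_mul_mul_rpow_le (abs_nbessel_le_one hl _) _ ht _))

theorem norm_hankel_le {l : ℝ} (hl : -(1 / 2) ≤ l) (h : 𝓢(ℝ, ℂ)) (v : ℝ) :
    ‖hankel l h v‖ ≤ ∫ t in Set.Ioi (0 : ℝ), ‖h t‖ * t ^ (2 * l + 1) :=
  norm_integral_le_of_norm_le (integrableOn_norm_mul_rpow h (by linarith))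
    ((ae_restrict_iff' measurableSet_Ioi).2 (Filter.Eventually.of_forall fun _ ht =>
      norm_ofReal_mul_mul_rpow_le (abs_nbessel_le_one hl _) _ ht _))

theorem hankel_neg (l : ℝ) (h : 𝓢(ℝ, ℂ)) (v : ℝ) : hankel l h (-v) = hankel l h v := by
  simp only [hankel, mul_neg, nbessel_neg]

theorem hasDerivAt_nbessel_mul {l : ℝ} (hl : -(1 / 2) ≤ l) (t v : ℝ) :
    HasDerivAt (fun t => nbessel l (t * v)) (-(t * v ^ 2 / (2 * l + 2) * nbessel (l + 1) (t * v)))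
      t := by
  have h1 : HasDerivAt (fun t : ℝ => t * v) v t := by
    simpa using (hasDerivAt_id t).mul_const v
  refine ((hasDerivAt_nbessel hl (t * v)).comp t h1).congr_deriv ?_
  ring

theorem hasDerivAt_hankel {l : ℝ} (hl : -(1 / 2) ≤ l) (h : 𝓢(ℝ, ℂ)) (v : ℝ) :
    HasDerivAt (hankel l h) (-((v / (2 * l + 2) : ℝ) : ℂ) * hankel (l + 1) h v) v := by
  have hl1 : -(1 / 2) ≤ l + 1 := by linarith
  have hc : 0 < 2 * l + 2 := by linarith
  have hs : (0 : ℝ) ≤ 2 * l + 1 := by linarith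
  have hs1 : 0 ≤ 2 * (l + 1) + 1 := by linarith
  rw [hankel, ← integral_const_mul]
  refine (hasDerivAt_integral_of_dominated_loc_of_deriv_le
    (F := fun v t => (nbessel l (t * v) : ℂ) * h t * ((t ^ (2 * l + 1) : ℝ) : ℂ))
    (F' := fun v t => -((v / (2 * l + 2) : ℝ) : ℂ) *
      ((nbessel (l + 1) (t * v) : ℂ) * h t * ((t ^ (2 * (l + 1) + 1) : ℝ) : ℂ)))
    (bound := fun t => (|v| + 1) / (2 * l + 2) * (‖h t‖ * t ^ (2 * (l + 1) + 1)))
    (Metric.ball_mem_nhds v one_pos) ?_ ?_ ?_ ?_ ?_ ?_).2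
  · exact Filter.Eventually.of_forall fun v =>
      (continuous_hankel_integrand hl hs h v).aestronglyMeasurable
  · exact integrableOn_hankel_integrand hl hs h v
  · exact (continuous_const.mul (continuous_hankel_integrand hl1 hs1 h v)).aestronglyMeasurable
  · refine (ae_restrict_iff' measurableSet_Ioi).2 (Filter.Eventually.of_forall fun t ht x hx => ?_)
    have ht0 : 0 < t := ht
    have hx' : |x| ≤ |v| + 1 := by
      have h1 : |x - v| < 1 := by simpa [Real.dist_eq] using hx
      have h2 := abs_sub_abs_le_abs_sub x v
      linarith
    rw [norm_mul, norm_neg, Complex.norm_real, Real.norm_eq_abs, abs_div, abs_of_pos hc]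
    gcongr
    exact norm_ofReal_mul_mul_rpow_le (abs_nbessel_le_one hl1 _) _ ht _
  · exact (integrableOn_norm_mul_rpow h hs1).const_mul _
  · refine (ae_restrict_iff' measurableSet_Ioi).2 (Filter.Eventually.of_forall fun t ht x _ => ?_)
    have ht0 : 0 < t := ht
    have h1 := (((hasDerivAt_nbessel_mul hl x t).ofReal_comp).mul_const (h t)).mul_const
      ((t ^ (2 * l + 1) : ℝ) : ℂ)
    simp only [mul_comm x t, mul_comm _ t] at h1
    refine h1.congr_deriv ?_
    have h2 : t ^ (2 * (l + 1) + 1) = t ^ 2 * t ^ (2 * l + 1) := by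
      rw [← Real.rpow_natCast t 2, ← Real.rpow_add ht0]
      congr 1
      push_cast
      ring
    rw [h2]
    push_cast
    ring

theorem deriv_neg_of_even {f : ℝ → ℂ} (hf : ∀ t, f (-t) = f t) (t : ℝ) :
    deriv f (-t) = -deriv f t := by
  have h1 := deriv_comp_neg f t
  simp only [hf] at h1
  rw [h1, neg_neg]

theorem even_of_mul_odd {f g : ℝ → ℂ} (hf : ∀ t, f (-t) = -f t)
    (hg : ∀ t : ℝ, (t : ℂ) * g t = f t) (t : ℝ) : g (-t) = g t := by
  rcases eq_or_ne t 0 with rfl | ht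
  · simp
  · have h1 := hg (-t)
    rw [hf, ← hg, Complex.ofReal_neg, neg_mul, neg_inj] at h1
    exact mul_left_cancel₀ (Complex.ofReal_ne_zero.2 ht) h1

/-- The Bessel operator on even Schwartz functions is intertwined with multiplication by `-v²`. -/
theorem exists_sq_mul_hankel_eq {l : ℝ} (hl : -(1 / 2) ≤ l) (h : 𝓢(ℝ, ℂ))
    (heven : ∀ t, h (-t) = h t) :
    ∃ D : 𝓢(ℝ, ℂ), (∀ t, D (-t) = D t) ∧
      ∀ v : ℝ, (v : ℂ) ^ 2 * hankel l h v = -hankel l D v := by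
  have hl1 : -(1 / 2) ≤ l + 1 := by linarith
  have hc : 0 < 2 * l + 2 := by linarith
  have hodd := deriv_neg_of_even heven
  obtain ⟨g, hg⟩ := exists_schwartzMap_mul_eq (derivCLM ℂ ℂ h) (by
    have := hodd 0
    rw [neg_zero, self_eq_neg] at this
    simpa using this)
  simp only [derivCLM_apply] at hg
  have hgeven := even_of_mul_odd hodd hg
  set D : 𝓢(ℝ, ℂ) := ((2 * l + 2 : ℝ) : ℂ) • g +
    smulLeftCLM ℂ (fun t : ℝ => t) (derivCLM ℂ ℂ g) with hD
  have hDt : ∀ t : ℝ, D t = ((2 * l + 2 : ℝ) : ℂ) * g t + (t : ℂ) * deriv g t := by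
    intro t
    rw [hD, add_apply, smul_apply, smulLeftCLM_apply_apply (by fun_prop)]
    simp
  refine ⟨D, fun t => ?_, fun v => ?_⟩
  · rw [hDt, hDt, hgeven, deriv_neg_of_even hgeven]
    push_cast
    ring
  set W : ℝ → ℂ := fun t => (nbessel l (t * v) : ℂ) * g t * ((t ^ (2 * l + 2) : ℝ) : ℂ)
    + ((v ^ 2 / (2 * l + 2) : ℝ) : ℂ) *
      ((nbessel (l + 1) (t * v) : ℂ) * h t * ((t ^ (2 * l + 2) : ℝ) : ℂ)) with hW
  set W' : ℝ → ℂ := fun t => (nbessel l (t * v) : ℂ) * D t * ((t ^ (2 * l + 1) : ℝ) : ℂ)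
    + (v : ℂ) ^ 2 * ((nbessel l (t * v) : ℂ) * h t * ((t ^ (2 * l + 1) : ℝ) : ℂ)) with hW'
  have hi1 := integrableOn_hankel_integrand hl (show 0 ≤ 2 * l + 1 by linarith) D v
  have hi2 := (integrableOn_hankel_integrand hl (show 0 ≤ 2 * l + 1 by linarith) h v).const_mul
    ((v : ℂ) ^ 2)
  have hWi : IntegrableOn W (Set.Ioi 0) :=
    (integrableOn_hankel_integrand hl hc.le g v).add
      ((integrableOn_hankel_integrand hl1 hc.le h v).const_mul _)
  have hW'i : IntegrableOn W' (Set.Ioi 0) := hi1.add hi2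
  have hWd : ∀ t ∈ Set.Ioi (0 : ℝ), HasDerivAt W (W' t) t := by
    intro t ht
    have ht0 : 0 < t := ht
    have d1 := (hasDerivAt_nbessel_mul hl t v).ofReal_comp
    have d2 := (hasDerivAt_nbessel_mul hl1 t v).ofReal_comp
    have d3 := (Real.hasDerivAt_rpow_const (p := 2 * l + 2) (Or.inl ht0.ne')).ofReal_comp
    have d4 := (g.differentiableAt (x := t)).hasDerivAt
    have d5 := (h.differentiableAt (x := t)).hasDerivAt
    refine (((d1.mul d4).mul d3).add (((d2.mul d5).mul d3).const_mul _)).congr_deriv ?_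
    have h1 : t ^ (2 * l + 2) = t * t ^ (2 * l + 1) := by
      rw [← Real.rpow_one_add' ht0.le (by linarith)]
      congr 1
      ring
    have h2 := congrArg (fun x : ℝ => (x : ℂ)) (nbessel_recurrence hl (t * v))
    simp only [hW', hDt, h1, ← hg, Pi.mul_apply, show l + 1 + 1 = l + 2 by ring,
      show 2 * (l + 1) + 2 = 2 * l + 4 by ring, show 2 * l + 2 - 1 = 2 * l + 1 by ring]
    have h3 : ((v ^ 2 / (2 * l + 2) : ℝ) : ℂ) * ((2 * l + 2 : ℝ) : ℂ) = (v : ℂ) ^ 2 := by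
      rw [← Complex.ofReal_mul, div_mul_cancel₀ _ hc.ne', Complex.ofReal_pow]
    push_cast at h2 h3 ⊢
    linear_combination ((v : ℂ) ^ 2 / (2 * l + 2) * h t * (t ^ (2 * l + 1) : ℝ)) * h2 +
      (nbessel l (t * v) * h t * (t ^ (2 * l + 1) : ℝ)) * h3
  have hWt := tendsto_zero_of_hasDerivAt_of_integrableOn_Ioi hWd hW'i hWi
  have hWc : Continuous W := (continuous_hankel_integrand hl hc.le g v).add
      (continuous_const.mul (continuous_hankel_integrand hl1 hc.le h v))
  have hint := integral_Ioi_of_hasDerivAt_of_tendsto hWc.continuousWithinAt hWd hW'i hWt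
  rw [hW', integral_add hi1 hi2, integral_const_mul] at hint
  simp only [hW, Real.zero_rpow hc.ne', Complex.ofReal_zero, mul_zero, add_zero, sub_zero] at hint
  rw [hankel, hankel]
  linear_combination hint

theorem exists_pow_mul_norm_hankel_le {l : ℝ} (hl : -(1 / 2) ≤ l) (k : ℕ) (h : 𝓢(ℝ, ℂ))
    (heven : ∀ t, h (-t) = h t) : ∃ C : ℝ, ∀ v, |v| ^ (2 * k) * ‖hankel l h v‖ ≤ C := by
  induction k generalizing h with
  | zero => exact ⟨_, fun v => by simpa using norm_hankel_le hl h v⟩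
  | succ k ih =>
    obtain ⟨D, hD, hv⟩ := exists_sq_mul_hankel_eq hl h heven
    obtain ⟨C, hC⟩ := ih D hD
    refine ⟨C, fun v => (hC v).trans' ?_⟩
    have := congrArg norm (hv v)
    rw [norm_neg, norm_mul, norm_pow, Complex.norm_real, Real.norm_eq_abs] at this
    rw [← this]
    apply le_of_eq
    ring

theorem exists_schwartzMap_eq_hankel {l : ℝ} (hl : -(1 / 2) ≤ l) (h : 𝓢(ℝ, ℂ))
    (heven : ∀ t, h (-t) = h t) : ∃ F : 𝓢(ℝ, ℂ), ∀ v, F v = hankel l h v := by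
  set B : Set (ℝ → ℂ) := {F | ∃ (m : ℕ) (l : ℝ) (h : 𝓢(ℝ, ℂ)), -(1 / 2) ≤ l ∧
    (∀ t, h (-t) = h t) ∧ F = fun v : ℝ => (v : ℂ) ^ m * hankel l h v} with hB
  refine exists_schwartzMap_of_deriv_closed (S := Submodule.span ℂ B) ?_ ?_
    (Submodule.subset_span ⟨0, l, h, hl, heven, by simp⟩)
  · intro F hF
    induction hF using Submodule.span_induction with
    | mem F hF =>
      obtain ⟨m, l, h, hl, heven, rfl⟩ := hF
      refine ⟨_, Submodule.add_mem _
        (Submodule.smul_mem _ (m : ℂ) (Submodule.subset_span ⟨m - 1, l, h, hl, heven, rfl⟩))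
        (Submodule.smul_mem _ (-((1 / (2 * l + 2) : ℝ) : ℂ)) (Submodule.subset_span
          ⟨m + 1, l + 1, h, by linarith, heven, rfl⟩)), fun x => ?_⟩
      refine (((hasDerivAt_pow m (x : ℂ)).comp_ofReal).mul
        (hasDerivAt_hankel hl h x)).congr_deriv ?_
      simp only [Pi.add_apply, Pi.smul_apply, smul_eq_mul]
      push_cast
      ring
    | zero => exact ⟨0, Submodule.zero_mem _, fun x => hasDerivAt_const x 0⟩
    | add F G _ _ ihF ihG =>
      obtain ⟨F', hF', hF⟩ := ihF
      obtain ⟨G', hG', hG⟩ := ihG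
      exact ⟨F' + G', Submodule.add_mem _ hF' hG', fun x => (hF x).add (hG x)⟩
    | smul c F _ ih =>
      obtain ⟨F', hF', hF⟩ := ih
      exact ⟨c • F', Submodule.smul_mem _ c hF', fun x => (hF x).const_smul c⟩
  · intro F hF k
    induction hF using Submodule.span_induction with
    | mem F hF =>
      obtain ⟨m, l, h, hl, heven, rfl⟩ := hF
      obtain ⟨C₀, hC₀⟩ := exists_pow_mul_norm_hankel_le hl 0 h heven
      obtain ⟨C, hC⟩ := exists_pow_mul_norm_hankel_le hl (k + m) h heven
      refine ⟨C₀ + C, fun v => ?_⟩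
      rw [norm_mul, norm_pow, Complex.norm_real, Real.norm_eq_abs, ← mul_assoc, ← pow_add]
      have h1 : |v| ^ (k + m) ≤ |v| ^ (2 * 0) + |v| ^ (2 * (k + m)) := by
        rcases le_total |v| 1 with hv | hv
        · have := pow_le_one₀ (n := k + m) (abs_nonneg v) hv
          have h3 : 0 ≤ |v| ^ (2 * (k + m)) := by positivity
          simp only [mul_zero, pow_zero]
          linarith
        · have := pow_le_pow_right₀ hv (show k + m ≤ 2 * (k + m) by omega)
          simp only [mul_zero, pow_zero]
          linarith
      have h2 := mul_le_mul_of_nonneg_right h1 (norm_nonneg (hankel l h v))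
      linarith [hC₀ v, hC v]
    | zero => exact ⟨0, fun x => by simp⟩
    | add F G _ _ ihF ihG =>
      obtain ⟨C, hC⟩ := ihF
      obtain ⟨C', hC'⟩ := ihG
      refine ⟨C + C', fun x => ?_⟩
      have h1 := mul_le_mul_of_nonneg_left (norm_add_le (F x) (G x))
        (pow_nonneg (abs_nonneg x) k)
      simp only [Pi.add_apply]
      linarith [hC x, hC' x]
    | smul c F _ ih =>
      obtain ⟨C, hC⟩ := ih
      refine ⟨‖c‖ * C, fun x => ?_⟩
      have := mul_le_mul_of_nonneg_left (hC x) (norm_nonneg c)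
      rw [Pi.smul_apply, norm_smul]
      linarith

theorem exists_schwartzMap_comp_pow (f : 𝓢(ℝ, ℂ)) {R : ℕ} (hR : R ≠ 0) :
    ∃ g : 𝓢(ℝ, ℂ), ∀ t, g t = f (t ^ R) := by
  refine ⟨compCLM ℂ (g := fun t : ℝ => t ^ R) (by fun_prop) ⟨1, 1, fun x => ?_⟩ f, fun t => rfl⟩
  rw [norm_pow, one_mul, pow_one]
  rcases le_total ‖x‖ 1 with h | h
  · have : 0 ≤ ‖x‖ ^ R := by positivity
    linarith
  · linarith [le_self_pow₀ h hR]

theorem exists_schwartzMap_comp_mul_left (f : 𝓢(ℝ, ℂ)) {c : ℝ} (hc : c ≠ 0) :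
    ∃ g : 𝓢(ℝ, ℂ), ∀ t, g t = f (c * t) := by
  refine ⟨compCLM ℂ (g := fun t : ℝ => c * t) (by fun_prop) ⟨1, |c|⁻¹, fun x => ?_⟩ f,
    fun t => rfl⟩
  have : 0 < |c| := abs_pos.2 hc
  rw [norm_mul, pow_one, Real.norm_eq_abs, Real.norm_eq_abs, inv_mul_eq_div, le_div_iff₀ this]
  linarith

theorem integral_eq_integral_Ioi_add {G : ℝ → ℂ} (h1 : IntegrableOn G (Set.Ioi 0))
    (h2 : IntegrableOn (fun x => G (-x)) (Set.Ioi 0)) :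
    ∫ x, G x = (∫ x in Set.Ioi 0, G x) + ∫ x in Set.Ioi 0, G (-x) := by
  have h3 : IntegrableOn G (Set.Iio 0) := by
    have := (Measure.measurePreserving_neg (volume : Measure ℝ)).integrableOn_comp_preimage
      (f := G) (s := Set.Iio 0) (Homeomorph.neg ℝ).measurableEmbedding
    rw [← this]
    simpa [Function.comp_def] using h2
  rw [← integrableOn_Iic_iff_integrableOn_Iio] at h3
  rw [← intervalIntegral.integral_Iic_add_Ioi h3 h1, integral_comp_neg_Ioi, neg_zero, add_comm]

/-- The substitution `x = t ^ R` in an integral of the transform's kernel over the half-line. -/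
theorem integral_Ioi_bessel_kernel {R : ℕ} (hR : R ≠ 0) {κ l : ℝ}
    (hl : -(1 / 2) ≤ l) (hlR : l = (2 * κ - 1) * R / 2) (C : ℂ) {f f₀ f₁ : 𝓢(ℝ, ℂ)}
    (h₀ : ∀ t, f₀ t = f (t ^ R)) (h₁ : ∀ t : ℝ, f₁ t = (t : ℂ) ^ R * f (t ^ R)) (y : ℝ)
    {G : ℝ → ℂ} (hG : ∀ x : ℝ, 0 < x → G x =
      ((nbessel l (R * |x * y| ^ (1 / (R : ℝ))) : ℂ)
        + C * ((x * y : ℝ) : ℂ) * (nbessel (l + R) (R * |x * y| ^ (1 / (R : ℝ))) : ℂ))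
        * f x * ((|x| ^ (2 * κ + 2 / R - 2) : ℝ) : ℂ)) :
    IntegrableOn G (Set.Ioi 0) ∧ ∫ x in Set.Ioi 0, G x =
      R * (hankel l f₀ (R * |y| ^ (1 / (R : ℝ))) + C * y * ∫ t in Set.Ioi (0 : ℝ),
        (nbessel (l + R) (t * (R * |y| ^ (1 / (R : ℝ)))) : ℂ) * f₁ t
          * ((t ^ (2 * l + 1) : ℝ) : ℂ)) := by
  have hR0 : (0 : ℝ) < R := by positivity
  have hs : 0 ≤ 2 * l + 1 := by linarith
  set v := (R : ℝ) * |y| ^ (1 / (R : ℝ)) with hv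
  have hi₀ := integrableOn_hankel_integrand hl hs f₀ v
  have hi₁ := (integrableOn_hankel_integrand (show -(1 / 2) ≤ l + R by linarith) hs f₁ v).const_mul
    (C * y)
  have hsub : Set.EqOn (fun t : ℝ => (|(R : ℝ)| * t ^ ((R : ℝ) - 1)) • G (t ^ (R : ℝ)))
      (fun t : ℝ => (R : ℂ) * ((nbessel l (t * v) : ℂ) * f₀ t * ((t ^ (2 * l + 1) : ℝ) : ℂ)
        + C * y * ((nbessel (l + R) (t * v) : ℂ) * f₁ t * ((t ^ (2 * l + 1) : ℝ) : ℂ))))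
      (Set.Ioi 0) := by
    intro t ht
    have ht0 : 0 < t := ht
    have e1 : (R : ℝ) * |t ^ (R : ℝ) * y| ^ (1 / (R : ℝ)) = t * v := by
      rw [abs_mul, abs_of_pos (show 0 < t ^ (R : ℝ) by positivity),
        Real.mul_rpow (by positivity) (by positivity), ← Real.rpow_mul ht0.le,
        mul_one_div_cancel hR0.ne', Real.rpow_one, hv]
      ring
    have e2 : t ^ (2 * l + 1) = t ^ ((R : ℝ) - 1) * |t ^ (R : ℝ)| ^ (2 * κ + 2 / R - 2) := by
      rw [abs_of_pos (show 0 < t ^ (R : ℝ) by positivity), ← Real.rpow_mul ht0.le,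
        ← Real.rpow_add ht0]
      congr 1
      rw [hlR]
      field_simp
      ring
    simp only [hG _ (show 0 < t ^ (R : ℝ) by positivity), e1, e2, h₀, h₁, abs_of_pos hR0,
      Complex.real_smul]
    simp only [Real.rpow_natCast]
    push_cast
    ring
  constructor
  · rw [← integrableOn_Ioi_comp_rpow_iff G hR0.ne', integrableOn_congr_fun hsub measurableSet_Ioi]
    exact (hi₀.add hi₁).const_mul _
  · rw [← integral_comp_rpow_Ioi G hR0.ne', setIntegral_congr_fun measurableSet_Ioi hsub,
      integral_const_mul, integral_add hi₀ hi₁, integral_const_mul, hankel]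

/-- for 2/a ∈ ℕ and lambda = (2κ-1)/a ≥ -1/2, the generalized Fourier
transform of a Schwartz function f has the form F₁(|y|^{a/2}) + y F₂(|y|^{a/2})
with even Schwartz functions F₁, F₂. -/
theorem stmt14 (a κ : ℝ) (ha : 0 < a) (haN : ∃ R : ℕ, (R : ℝ) = 2 / a)
    (hκ : 0 ≤ κ) (hl : -(1 / 2 : ℝ) ≤ (2 * κ - 1) / a) (f : SchwartzMap ℝ ℂ) :
    ∃ F₁ F₂ : SchwartzMap ℝ ℂ,
      (∀ v : ℝ, F₁ (-v) = F₁ v) ∧ (∀ v : ℝ, F₂ (-v) = F₂ v) ∧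
      ∀ y : ℝ, genFourier κ a f y = F₁ (|y| ^ (a / 2)) + (y : ℂ) * F₂ (|y| ^ (a / 2)) := by
  obtain ⟨R, hR⟩ := haN
  have hRa : 0 < (R : ℝ) := by rw [hR]; positivity
  have hR0 : R ≠ 0 := by rintro rfl; simp at hRa
  have haR : a = 2 / R := by rw [hR]; field_simp
  have ha2 : a / 2 = 1 / (R : ℝ) := by rw [haR]; field_simp
  set l := (2 * κ - 1) / a with hl_def
  have hlR : l = (2 * κ - 1) * R / 2 := by rw [hl_def, haR]; field_simp
  have hlR1 : -(1 / 2) ≤ l + R := by linarith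
  set C : ℂ := Complex.exp (-(Real.pi / a) * Complex.I) * ((a ^ (-(2 / a)) : ℝ) : ℂ)
      * ((Real.Gamma (l + 1) / Real.Gamma (l + 1 + 2 / a) : ℝ) : ℂ) with hC
  set c₀ : ℂ := ((1 / (2 * a ^ l * Real.Gamma (l + 1)) : ℝ) : ℂ) with hc₀
  obtain ⟨fn, hfn⟩ := exists_schwartzMap_comp_mul_left f (show (-1 : ℝ) ≠ 0 by norm_num)
  replace hfn : ∀ t, fn t = f (-t) := fun t => by rw [hfn, neg_one_mul]
  obtain ⟨g, hg⟩ := exists_schwartzMap_mul_eq (f - fn) (by simp [hfn])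
  have hgeven := even_of_mul_odd (f := f - fn) (g := g) (by simp [hfn]) hg
  set idf := smulLeftCLM ℂ (fun t : ℝ => t) f with hidf
  set idfn := smulLeftCLM ℂ (fun t : ℝ => t) fn with hidfn
  obtain ⟨f₀, hf₀⟩ := exists_schwartzMap_comp_pow f hR0
  obtain ⟨fn₀, hfn₀⟩ := exists_schwartzMap_comp_pow fn hR0
  obtain ⟨f₁, hf₁⟩ := exists_schwartzMap_comp_pow idf hR0
  obtain ⟨fn₁, hfn₁⟩ := exists_schwartzMap_comp_pow idfn hR0
  obtain ⟨g₀, hg₀⟩ := exists_schwartzMap_comp_pow g hR0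
  replace hf₁ : ∀ t : ℝ, f₁ t = (t : ℂ) ^ R * f (t ^ R) := fun t => by
    rw [hf₁, hidf, smulLeftCLM_apply_apply (by fun_prop)]; simp
  replace hfn₁ : ∀ t : ℝ, fn₁ t = (t : ℂ) ^ R * fn (t ^ R) := fun t => by
    rw [hfn₁, hidfn, smulLeftCLM_apply_apply (by fun_prop)]; simp
  obtain ⟨H₁, hH₁⟩ := exists_schwartzMap_eq_hankel hl (f₀ + fn₀) (fun t => by
    simp only [add_apply, hf₀, hfn₀, hfn]
    rcases R.even_or_odd with h | h
    · rw [h.neg_pow]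
    · rw [h.neg_pow, neg_neg, add_comm])
  obtain ⟨H₂, hH₂⟩ := exists_schwartzMap_eq_hankel hlR1 g₀ (fun t => by
    rw [hg₀, hg₀]
    rcases R.even_or_odd with h | h
    · rw [h.neg_pow]
    · rw [h.neg_pow, hgeven])
  obtain ⟨K₁, hK₁⟩ := exists_schwartzMap_comp_mul_left H₁ hRa.ne'
  obtain ⟨K₂, hK₂⟩ := exists_schwartzMap_comp_mul_left H₂ hRa.ne'
  refine ⟨(c₀ * R) • K₁, (c₀ * R * C) • K₂, fun v => ?_, fun v => ?_, fun y => ?_⟩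
  · rw [smul_apply, smul_apply, hK₁, hK₁, hH₁, hH₁, mul_neg, hankel_neg]
  · rw [smul_apply, smul_apply, hK₂, hK₂, hH₂, hH₂, mul_neg, hankel_neg]
  rw [genFourier, ← hl_def, ← hc₀, ha2, smul_apply, smul_apply, hK₁, hK₂, hH₁, hH₂]
  have hbker : ∀ x : ℝ, bker κ a x = (nbessel l (R * |x| ^ (1 / (R : ℝ))) : ℂ)
      + C * (x : ℂ) * (nbessel (l + R) (R * |x| ^ (1 / (R : ℝ))) : ℂ) := fun x => by
    rw [bker, ← hl_def, ← hC, ha2, ← hR]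
  have hexp : 2 * κ + a - 2 = 2 * κ + 2 / R - 2 := by rw [← haR]
  obtain ⟨hi, he⟩ := integral_Ioi_bessel_kernel hR0 hl hlR C hf₀ hf₁ y
    (G := fun x => bker κ a (x * y) * f x * ((|x| ^ (2 * κ + a - 2) : ℝ) : ℂ))
    (fun x _ => by simp only [hbker, hexp])
  obtain ⟨hi', he'⟩ := integral_Ioi_bessel_kernel hR0 hl hlR C hfn₀ hfn₁ (-y)
    (G := fun x => bker κ a (-x * y) * f (-x) * ((|-x| ^ (2 * κ + a - 2) : ℝ) : ℂ))
    (fun x _ => by simp only [hbker, hexp, hfn, abs_neg, neg_mul, mul_neg])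
  rw [integral_eq_integral_Ioi_add hi hi', he, he', abs_neg]
  set v := (R : ℝ) * |y| ^ (1 / (R : ℝ))
  have hs : 0 ≤ 2 * l + 1 := by linarith
  have hadd : hankel l (f₀ + fn₀) v = hankel l f₀ v + hankel l fn₀ v := by
    rw [hankel, hankel, hankel, ← integral_add (integrableOn_hankel_integrand hl hs f₀ v)
      (integrableOn_hankel_integrand hl hs fn₀ v)]
    congr 1
    ext t
    rw [add_apply]
    ring
  have hsub : hankel (l + R) g₀ v =
      (∫ t in Set.Ioi (0 : ℝ), (nbessel (l + R) (t * v) : ℂ) * f₁ t * ((t ^ (2 * l + 1) : ℝ) : ℂ))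
      - ∫ t in Set.Ioi (0 : ℝ),
        (nbessel (l + R) (t * v) : ℂ) * fn₁ t * ((t ^ (2 * l + 1) : ℝ) : ℂ) := by
    rw [hankel, ← integral_sub (integrableOn_hankel_integrand hlR1 hs f₁ v)
      (integrableOn_hankel_integrand hlR1 hs fn₁ v)]
    refine setIntegral_congr_fun measurableSet_Ioi fun t ht => ?_
    have ht0 : 0 < t := ht
    have h1 : t ^ (2 * (l + R) + 1) = t ^ R * t ^ R * t ^ (2 * l + 1) := by
      rw [← Real.rpow_natCast t R, ← Real.rpow_add ht0, ← Real.rpow_add ht0]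
      congr 1
      ring
    have h2 := hg (t ^ R)
    rw [sub_apply] at h2
    simp only [hf₁, hfn₁, hg₀, h1]
    push_cast at h2 ⊢
    linear_combination
      (nbessel (l + R) (t * v) : ℂ) * (t : ℂ) ^ R * ((t ^ (2 * l + 1) : ℝ) : ℂ) * h2
  rw [hadd, hsub, smul_eq_mul, smul_eq_mul]
  push_cast
  ring
end
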